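/- arXiv:2509.04879 — 4 statements merged into one kernel-verified Lean document; each statement's English description precedes it below -/
import Mathlib

section
/- Let S : ℓ²(ℕ, ℂ) → ℓ²(ℕ, ℂ) be the right shift operator, defined by (S x)(0) = 0 and (S x)(k+1) = x(k) for all k ∈ ℕ. For every integer m ≥ 2 and every f ∈ ℓ²(ℕ, ℂ), the closed linear span of the orbit {S^{m n} f : n ∈ ℕ} is a proper closed subspace of ℓ²(ℕ, ℂ); that is, f is not a cyclic vector for S^m. -/
theorem stmt5 (S : lp (fun _ : ℕ => ℂ) 2 →L[ℂ] lp (fun _ : ℕ => ℂ) 2)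
    (hS0 : ∀ x : lp (fun _ : ℕ => ℂ) 2, S x 0 = 0)
    (hS1 : ∀ (x : lp (fun _ : ℕ => ℂ) 2) (k : ℕ), S x (k + 1) = x k)
    (m : ℕ) (hm : 2 ≤ m) (f : lp (fun _ : ℕ => ℂ) 2) :
    (Submodule.span ℂ (Set.range fun n : ℕ => (S ^ (m * n)) f)).topologicalClosure ≠ ⊤ := by
  intro htop
  have hz : ∀ k j : ℕ, j < k → (S ^ k) f j = 0 := by
    intro k
    induction k with
    | zero => intro j hj; omega
    | succ k ih =>
      intro j hj
      rw [pow_succ']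
      change S ((S ^ k) f) j = 0
      cases j with
      | zero => exact hS0 _
      | succ j => rw [hS1]; exact ih j (by omega)
  obtain ⟨a, b, hab, h0⟩ : ∃ a b : ℂ, a * f 0 + b * f 1 = 0 ∧ ¬ (a = 0 ∧ b = 0) := by
    by_cases h : f 0 = 0 ∧ f 1 = 0
    · exact ⟨1, 0, by simp [h.1], by simp⟩
    · exact ⟨f 1, - f 0, by ring, fun h' => h ⟨by simpa using h'.2, h'.1⟩⟩
  have hc : ∀ i : ℕ, Continuous fun x : lp (fun _ : ℕ => ℂ) 2 => x i := fun i =>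
    (continuous_apply i).comp lp.uniformContinuous_coe.continuous
  let K : Submodule ℂ (lp (fun _ : ℕ => ℂ) 2) :=
    { carrier := {x | a * x 0 + b * x 1 = 0}
      zero_mem' := by simp
      add_mem' := by
        intro x y hx hy
        simp only [Set.mem_setOf_eq, lp.coeFn_add, Pi.add_apply] at *
        linear_combination hx + hy
      smul_mem' := by
        intro c x hx
        simp only [Set.mem_setOf_eq, lp.coeFn_smul, Pi.smul_apply, smul_eq_mul] at *
        linear_combination c * hx }
  have hK : IsClosed (K : Set (lp (fun _ : ℕ => ℂ) 2)) :=
    isClosed_eq ((continuous_const.mul (hc 0)).add (continuous_const.mul (hc 1))) continuous_const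
  have hle : Submodule.span ℂ (Set.range fun n : ℕ => (S ^ (m * n)) f) ≤ K := by
    rw [Submodule.span_le]
    rintro _ ⟨n, rfl⟩
    change a * (S ^ (m * n)) f 0 + b * (S ^ (m * n)) f 1 = 0
    cases n with
    | zero => simpa using hab
    | succ n =>
      have : 2 ≤ m * (n + 1) := by nlinarith
      rw [hz _ 0 (by omega), hz _ 1 (by omega)]; simp
  have hall : ∀ x : lp (fun _ : ℕ => ℂ) 2, a * x 0 + b * x 1 = 0 := fun x =>
    Submodule.topologicalClosure_minimal _ hle hK (htop ▸ Submodule.mem_top : x ∈ _)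
  apply h0
  constructor
  · simpa [lp.coeFn_single] using hall (lp.single 2 0 (1 : ℂ))
  · simpa [lp.coeFn_single] using hall (lp.single 2 1 (1 : ℂ))
end

section
/- Let μ be the normalized Haar measure on the circle 𝕋 = AddCircle (2π), let L² = L²(𝕋, μ; ℂ), and let H² = {g ∈ L² : the n-th Fourier coefficient of g vanishes for every integer n < 0}, a closed subspace of L². Let φ : 𝕋 → ℂ be a bounded measurable function whose Fourier coefficients vanish for all integers n < 0, and let f ∈ H². If there exist constants A, B > 0 such that A‖g‖² ≤ ∑_{n=0}^∞ |⟨g, φⁿ · f⟩_{L²}|² ≤ B‖g‖² for all g ∈ H² (where φⁿ · f denotes the a.e. pointwise product), then |φ(x)| = 1 for μ-almost every x ∈ 𝕋; that is, φ is (the boundary function of) an inner function. -/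
open MeasureTheory Real ComplexConjugate

instance : Fact (0 < 2 * Real.pi) := ⟨by positivity⟩

/-- The normalized Haar (probability) measure on the circle `𝕋 = AddCircle (2π)`. -/
noncomputable def μC : Measure (AddCircle (2 * Real.pi)) := AddCircle.haarAddCircle

noncomputable abbrev SeqL2 := lp (fun _ : ℕ => ℂ) 2

lemma seq_summable (x : SeqL2) : Summable fun n => ‖x n‖ ^ 2 := by
  have := (lp.memℓp x).summable (by norm_num)
  simpa using this

lemma seq_norm_sq (x : SeqL2) : ‖x‖ ^ 2 = ∑' n, ‖x n‖ ^ 2 := by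
  have := lp.norm_rpow_eq_tsum (p := 2) (by norm_num) x
  simpa using this

lemma seq_mem {x : ℕ → ℂ} (h : Summable fun n => ‖x n‖ ^ 2) : Memℓp (E := fun _ : ℕ => ℂ) x 2 := by
  apply memℓp_gen
  simpa using h

lemma seq_add (x y : SeqL2) (n : ℕ) : (x + y) n = x n + y n := rfl
lemma seq_sub (x y : SeqL2) (n : ℕ) : (x - y) n = x n - y n := rfl
lemma seq_smul (a : ℂ) (x : SeqL2) (n : ℕ) : (a • x) n = a * x n := rfl

lemma shift_mem (x : SeqL2) :
    Summable fun n : ℕ => ‖(match n with | 0 => 0 | n + 1 => x n : ℂ)‖ ^ 2 := by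
  rw [← summable_nat_add_iff 1]
  exact seq_summable x

noncomputable def seqShiftLin : SeqL2 →ₗ[ℂ] SeqL2 where
  toFun x := ⟨fun n => match n with | 0 => 0 | n + 1 => x n, seq_mem (shift_mem x)⟩
  map_add' x y := by
    ext n
    rw [seq_add]
    cases n with
    | zero => exact (add_zero (0 : ℂ)).symm
    | succ n => rfl
  map_smul' c x := by
    ext n
    rw [seq_smul]
    cases n with
    | zero => exact (mul_zero c).symm
    | succ n => rfl

noncomputable def seqShift : SeqL2 →ₗᵢ[ℂ] SeqL2 where
  toLinearMap := seqShiftLin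
  norm_map' x := by
    have h : ‖seqShiftLin x‖ ^ 2 = ‖x‖ ^ 2 := by
      rw [seq_norm_sq, seq_norm_sq, (seq_summable _).tsum_eq_zero_add]
      simp [seqShiftLin]
    exact (sq_eq_sq₀ (norm_nonneg _) (norm_nonneg _)).1 h

@[simp] lemma seqShift_zero (x : SeqL2) : seqShift x 0 = 0 := rfl
@[simp] lemma seqShift_succ (x : SeqL2) (n : ℕ) : seqShift x (n + 1) = x n := rfl

noncomputable def seqBack : SeqL2 →L[ℂ] SeqL2 :=
  ContinuousLinearMap.adjoint seqShift.toContinuousLinearMap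

@[simp] lemma seqBack_apply (x : SeqL2) (n : ℕ) : seqBack x n = x (n + 1) := by
  have h1 : seqShift (lp.single 2 n (1 : ℂ)) = (lp.single 2 (n + 1) (1 : ℂ) : SeqL2) := by
    ext k
    cases k with
    | zero => simp
    | succ k => simp [Pi.single_apply]
  have h := ContinuousLinearMap.adjoint_inner_right seqShift.toContinuousLinearMap
    (lp.single 2 n (1 : ℂ)) x
  change inner ℂ _ (seqBack x) = inner ℂ (seqShift _) x at h
  rw [h1, lp.inner_single_left, lp.inner_single_left] at h
  simpa using h

lemma seqBack_norm : ‖seqBack‖ ≤ 1 := by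
  unfold seqBack
  rw [LinearIsometryEquiv.norm_map]
  exact seqShift.norm_toContinuousLinearMap_le

/-- division with remainder by `z - λ`. -/
lemma seq_division (l : ℂ) (hl : ‖l‖ < 1) (c : SeqL2) :
    ∃ (a : ℂ) (d : SeqL2), c = a • lp.single 2 0 (1 : ℂ) + (seqShift d - l • d) := by
  have hn : ‖l • seqBack‖ < 1 := by
    rw [norm_smul]
    have := seqBack_norm
    nlinarith [norm_nonneg l, norm_nonneg seqBack]
  obtain ⟨u, hu⟩ := isUnit_one_sub_of_norm_lt_one hn
  obtain ⟨e, he⟩ : ∃ e : SeqL2, e - l • seqBack e = c := by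
    refine ⟨(↑u⁻¹ : SeqL2 →L[ℂ] SeqL2) c, ?_⟩
    have h := congrArg (fun F : SeqL2 →L[ℂ] SeqL2 => F c) u.mul_inv
    rw [hu] at h
    simpa using h
  refine ⟨e 0, seqBack e, ?_⟩
  rw [← he]
  ext n
  rw [seq_add, seq_sub, seq_sub, seq_smul, seq_smul]
  cases n with
  | zero => simp [sub_eq_add_neg]
  | succ n => simp

noncomputable def seqPS (c : SeqL2) : FormalMultilinearSeries ℂ ℂ ℂ :=
  FormalMultilinearSeries.ofScalars ℂ (fun n => c n)

lemma seqPS_radius (c : SeqL2) : 1 ≤ (seqPS c).radius := by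
  have := (seqPS c).le_radius_of_bound (r := 1) ‖c‖ (fun n => by
    simp only [seqPS, NNReal.coe_one, one_pow, mul_one]
    rw [FormalMultilinearSeries.ofScalars_norm]
    exact lp.norm_apply_le_norm (by norm_num) c n)
  simpa using this

lemma seqPS_hasSum (c : SeqL2) {w : ℂ} (hw : ‖w‖ < 1) :
    HasSum (fun n => c n * w ^ n) ((seqPS c).sum w) := by
  have h := (seqPS c).hasSum (x := w) (by
    refine Metric.eball_subset_eball (seqPS_radius c) ?_
    simpa [Metric.mem_eball, edist_zero_right, enorm_eq_nnnorm, ← NNReal.coe_lt_coe] using hw)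
  simpa [seqPS, FormalMultilinearSeries.ofScalars_apply_eq, mul_comm] using h

lemma seqPS_analytic (c : SeqL2) : AnalyticOnNhd ℂ (seqPS c).sum (Metric.ball 0 1) := by
  have h := (seqPS c).hasFPowerSeriesOnBall (lt_of_lt_of_le one_pos (seqPS_radius c))
  refine h.analyticOnNhd.mono ?_
  intro w hw
  refine Metric.eball_subset_eball (seqPS_radius c) ?_
  simpa [Metric.mem_eball, edist_zero_right, enorm_eq_nnnorm, ← NNReal.coe_lt_coe] using hw

lemma seqPS_mul (l : ℂ) (d : SeqL2) {w : ℂ} (hw : ‖w‖ < 1) :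
    (seqPS (seqShift d - l • d)).sum w = (w - l) * (seqPS d).sum w := by
  have h1 := seqPS_hasSum d hw
  have h2 := seqPS_hasSum (seqShift d - l • d) hw
  have h3 : HasSum (fun n => seqShift d n * w ^ n) (w * (seqPS d).sum w) := by
    rw [← hasSum_nat_add_iff' 1]
    simp only [seqShift_succ, Finset.range_one, Finset.sum_singleton, seqShift_zero, zero_mul,
      sub_zero]
    have e : (fun n => d n * w ^ (n + 1)) = fun n => w * (d n * w ^ n) := by
      funext n
      ring
    rw [e]
    exact h1.mul_left w
  refine h2.unique ?_
  have e : (fun n => (seqShift d - l • d) n * w ^ n) =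
      fun n => seqShift d n * w ^ n - l * (d n * w ^ n) := by
    funext n
    rw [seq_sub, seq_smul]
    ring
  rw [e, sub_mul]
  exact h3.sub (h1.mul_left l)

lemma seq_eq_zero_of_divisible (l : ℂ) (hl : ‖l‖ < 1) (K : Set SeqL2)
    (hK : ∀ c ∈ K, ∃ d ∈ K, c = seqShift d - l • d) (c : SeqL2) (hc : c ∈ K) : c = 0 := by
  have hl' : l ∈ Metric.ball (0 : ℂ) 1 := by simpa using hl
  have hpow : ∀ j : ℕ, ∃ d ∈ K, ∀ w : ℂ, ‖w‖ < 1 →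
      (seqPS c).sum w = (w - l) ^ j * (seqPS d).sum w := by
    intro j
    induction j with
    | zero => exact ⟨c, hc, by simp⟩
    | succ j ih =>
      obtain ⟨d, hd, h⟩ := ih
      obtain ⟨e, he, rfl⟩ := hK d hd
      refine ⟨e, he, fun w hw => ?_⟩
      rw [h w hw, seqPS_mul l e hw]
      ring
  have hord : analyticOrderAt (seqPS c).sum l = ⊤ := by
    refine ENat.eq_top_iff_forall_ge.2 fun j => ?_
    obtain ⟨d, -, h⟩ := hpow j
    rw [natCast_le_analyticOrderAt (seqPS_analytic c l hl')]
    refine ⟨_, seqPS_analytic d l hl', ?_⟩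
    filter_upwards [Metric.isOpen_ball.mem_nhds hl'] with w hw
    simpa using h w (by simpa using hw)
  rw [analyticOrderAt_eq_top] at hord
  have hz := (seqPS_analytic c).eqOn_zero_of_preconnected_of_eventuallyEq_zero
    (convex_ball (0 : ℂ) 1).isPreconnected hl' hord
  have hp := ((seqPS c).hasFPowerSeriesOnBall
    (lt_of_lt_of_le one_pos (seqPS_radius c))).hasFPowerSeriesAt
  have h0 : seqPS c = 0 := by
    have hev : (seqPS c).sum =ᶠ[nhds 0] 0 := by
      filter_upwards [Metric.ball_mem_nhds (0 : ℂ) one_pos] with w hw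
      exact hz hw
    exact (hp.congr hev).eq_zero
  have h1 := (FormalMultilinearSeries.ofScalars_series_eq_zero (E := ℂ)).1 h0
  ext n
  exact congrFun h1 n
section Abstract
variable {E : Type*} [NormedAddCommGroup E] [InnerProductSpace ℂ E] [CompleteSpace E]

lemma exists_synthesis (T : E →L[ℂ] E) (v : E) (A B : ℝ) (hA : 0 < A)
    (hs : ∀ g, Summable fun n : ℕ => ‖inner ℂ ((T ^ n) v) g‖ ^ 2)
    (hl : ∀ g, A * ‖g‖ ^ 2 ≤ ∑' n : ℕ, ‖inner ℂ ((T ^ n) v) g‖ ^ 2)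
    (hu : ∀ g, ∑' n : ℕ, ‖inner ℂ ((T ^ n) v) g‖ ^ 2 ≤ B * ‖g‖ ^ 2) :
    ∃ U : SeqL2 →L[ℂ] E, Function.Surjective U ∧ (∀ x, U (seqShift x) = T (U x)) ∧
      U (lp.single 2 0 (1 : ℂ)) = v := by
  let C0 : E →ₗ[ℂ] SeqL2 :=
    { toFun := fun g => ⟨fun n => inner ℂ ((T ^ n) v) g, seq_mem (hs g)⟩
      map_add' := fun x y => by ext n; rw [seq_add]; exact inner_add_right _ _ _
      map_smul' := fun c x => by ext n; rw [seq_smul]; exact inner_smul_right _ _ _ }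
  have hC0 : ∀ g n, C0 g n = inner ℂ ((T ^ n) v) g := fun g n => rfl
  let C : E →L[ℂ] SeqL2 := C0.mkContinuous (√B) (fun g => by
    have h : ‖C0 g‖ ^ 2 ≤ B * ‖g‖ ^ 2 := by
      rw [seq_norm_sq]; exact hu g
    have := Real.sqrt_le_sqrt h
    rwa [Real.sqrt_sq (norm_nonneg _), Real.sqrt_mul' _ (sq_nonneg _),
      Real.sqrt_sq (norm_nonneg _)] at this)
  have hC : ∀ g n, C g n = inner ℂ ((T ^ n) v) g := fun g n => rfl
  have hClow : ∀ g, A * ‖g‖ ^ 2 ≤ ‖C g‖ ^ 2 := by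
    intro g
    rw [seq_norm_sq]; exact hl g
  have hadj : ∀ g x, inner ℂ (ContinuousLinearMap.adjoint C x) g = inner ℂ x (C g) :=
    fun g x => ContinuousLinearMap.adjoint_inner_left C g x
  refine ⟨ContinuousLinearMap.adjoint C, ?_, ?_, ?_⟩
  · have hunit : IsUnit (ContinuousLinearMap.adjoint C ∘L C) := by
      refine ContinuousLinearMap.isUnit_of_forall_le_norm_inner_map _ (c := ⟨A, hA.le⟩) hA ?_
      intro x
      rw [ContinuousLinearMap.comp_apply, hadj, inner_self_eq_norm_sq_to_K]
      have := hClow x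
      have h2 : ‖((‖C x‖ : ℂ)) ^ 2‖ = ‖C x‖ ^ 2 := by simp
      change ‖x‖ ^ 2 * A ≤ ‖((‖C x‖ : ℂ)) ^ 2‖
      rw [h2]
      linarith
    rw [ContinuousLinearMap.isUnit_iff_bijective] at hunit
    intro y
    obtain ⟨x, hx⟩ := hunit.2 y
    exact ⟨C x, hx⟩
  · intro x
    refine ext_inner_right ℂ fun g => ?_
    rw [hadj, ← ContinuousLinearMap.adjoint_inner_right, hadj]
    have h1 := ContinuousLinearMap.adjoint_inner_right seqShift.toContinuousLinearMap x (C g)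
    change inner ℂ x (seqBack (C g)) = inner ℂ (seqShift x) (C g) at h1
    rw [← h1]
    congr 1
    ext n
    rw [seqBack_apply, hC, hC, ContinuousLinearMap.adjoint_inner_right, pow_succ']
    rfl
  · refine ext_inner_right ℂ fun g => ?_
    rw [hadj, lp.inner_single_left, hC]
    simp

theorem frame_bounds (T : E →L[ℂ] E) (v : E) (A B : ℝ) (hA : 0 < A)
    (hs : ∀ g, Summable fun n : ℕ => ‖inner ℂ ((T ^ n) v) g‖ ^ 2)
    (hl : ∀ g, A * ‖g‖ ^ 2 ≤ ∑' n : ℕ, ‖inner ℂ ((T ^ n) v) g‖ ^ 2)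
    (hu : ∀ g, ∑' n : ℕ, ‖inner ℂ ((T ^ n) v) g‖ ^ 2 ≤ B * ‖g‖ ^ 2)
    (e : E) (he : e ≠ 0) (l : ℂ) (hel : ∀ h, inner ℂ e (T h) = l * inner ℂ e h)
    (hinj : ∀ h, T h = l • h → h = 0) :
    ∃ K : ℝ, 0 < K ∧ ∀ (k : ℕ) (h : E), ‖h‖ ≤ K * ‖(T ^ k) h‖ ∧ ‖(T ^ k) h‖ ≤ K * ‖h‖ := by
  obtain ⟨U, hUs, hUT, hU0⟩ := exists_synthesis T v A B hA hs hl hu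
  have hpow : ∀ n : ℕ, inner ℂ e ((T ^ n) v) = l ^ n * inner ℂ e v := by
    intro n
    induction n with
    | zero => simp
    | succ n ih =>
      rw [pow_succ']
      change inner ℂ e (T ((T ^ n) v)) = _
      rw [hel, ih]; ring
  have hterm : ∀ n : ℕ, ‖inner ℂ ((T ^ n) v) e‖ ^ 2 = (‖l‖ ^ 2) ^ n * ‖inner ℂ e v‖ ^ 2 := by
    intro n
    rw [norm_inner_symm, hpow, norm_mul, norm_pow]; ring
  have hev : inner ℂ e v ≠ 0 := by
    intro h0
    have := hl e
    simp only [hterm, h0] at this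
    simp at this
    have h2 : 0 < A * ‖e‖ ^ 2 := mul_pos hA (pow_pos (norm_pos_iff.2 he) 2)
    linarith
  have hl1 : ‖l‖ < 1 := by
    have h := hs e
    simp only [hterm] at h
    have hne : ‖inner ℂ e v‖ ^ 2 ≠ 0 := by simpa using hev
    rw [summable_mul_right_iff hne, summable_geometric_iff_norm_lt_one] at h
    simp at h
    exact h
  have hker : ∀ c, U c = 0 → c = 0 := by
    intro c hc
    refine seq_eq_zero_of_divisible l hl1 {c | U c = 0} ?_ c hc
    intro c hc
    obtain ⟨a, d, rfl⟩ := seq_division l hl1 c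
    have h1 : a • v + (T (U d) - l • U d) = 0 := by
      have : U _ = 0 := hc
      simpa [hU0, hUT] using this
    have ha : a = 0 := by
      have h2 := congrArg (fun y => inner ℂ e y) h1
      simp only [inner_add_right, inner_sub_right, inner_smul_right, hel, sub_self, add_zero,
        inner_zero_right] at h2
      exact (mul_eq_zero.1 h2).resolve_right hev
    refine ⟨d, hinj _ ?_, by simp [ha]⟩
    rw [ha, zero_smul, zero_add] at h1
    exact sub_eq_zero.1 h1
  have hbij : Function.Bijective U := ⟨(injective_iff_map_eq_zero U).2 hker, hUs⟩
  let V := ContinuousLinearEquiv.ofBijective U (LinearMap.ker_eq_bot.2 hbij.1)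
    (LinearMap.range_eq_top.2 hbij.2)
  have hVU : ∀ x, V x = U x := fun x => rfl
  let W : E →L[ℂ] SeqL2 := V.symm
  have hUW : ∀ y, U (W y) = y := fun y => V.apply_symm_apply y
  have hWU : ∀ y, W (U y) = y := fun y => V.symm_apply_apply y
  have hUTk : ∀ k x, ∃ y, (T ^ k) (U x) = U y ∧ ‖y‖ = ‖x‖ := by
    intro k x
    induction k with
    | zero => exact ⟨x, by simp, rfl⟩
    | succ k ih =>
      obtain ⟨y, h1, h2⟩ := ih
      refine ⟨seqShift y, ?_, by simpa using h2⟩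
      rw [pow_succ', hUT, ← h1]; rfl
  refine ⟨‖U‖ * ‖W‖ + 1, by positivity, fun k h => ?_⟩
  obtain ⟨y, h1, h2⟩ := hUTk k (W h)
  rw [hUW] at h1
  have b1 : ‖h‖ ≤ ‖U‖ * ‖y‖ := by
    rw [h2]; simpa [hUW] using U.le_opNorm (W h)
  have b2 : ‖y‖ ≤ ‖W‖ * ‖(T ^ k) h‖ := by
    rw [h1]; simpa [hWU] using W.le_opNorm (U y)
  have b3 : ‖(T ^ k) h‖ ≤ ‖U‖ * ‖y‖ := by rw [h1]; exact U.le_opNorm y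
  have b4 : ‖y‖ ≤ ‖W‖ * ‖h‖ := by rw [h2]; exact W.le_opNorm h
  have n1 := norm_nonneg U
  constructor
  · nlinarith [mul_le_mul_of_nonneg_left b2 n1, norm_nonneg ((T ^ k) h)]
  · nlinarith [mul_le_mul_of_nonneg_left b4 n1, norm_nonneg h]

lemma scalar_contra (T : E →L[ℂ] E) (v : E) (A : ℝ) (hA : 0 < A)
    (hl : ∀ g, A * ‖g‖ ^ 2 ≤ ∑' n : ℕ, ‖inner ℂ ((T ^ n) v) g‖ ^ 2)
    (l : ℂ) (hT : T v = l • v) (e0 e1 : E) (he0 : e0 ≠ 0) (o1 : inner ℂ e1 e0 = (0 : ℂ))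
    (o2 : inner ℂ e1 e1 = (1 : ℂ)) : False := by
  have hTs : ∀ n : ℕ, (T ^ n) v = l ^ n • v := by
    intro n
    induction n with
    | zero => simp
    | succ n ih =>
      have e1 : (T ^ (n + 1)) v = T ((T ^ n) v) := by rw [pow_succ']; rfl
      rw [e1, ih, map_smul, hT, smul_smul, pow_succ]
  have hperp : ∀ g : E, inner ℂ v g = 0 → g = 0 := by
    intro g hg
    have h1 := hl g
    simp only [hTs, inner_smul_left, hg] at h1
    simp at h1
    by_contra hg0
    have : 0 < A * ‖g‖ ^ 2 := mul_pos hA (pow_pos (norm_pos_iff.2 hg0) 2)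
    linarith
  have hg := hperp (inner ℂ v e1 • e0 - inner ℂ v e0 • e1) (by
    rw [inner_sub_right, inner_smul_right, inner_smul_right]; ring)
  have h2 : inner ℂ e1 (inner ℂ v e1 • e0 - inner ℂ v e0 • e1) = (0 : ℂ) := by
    rw [hg, inner_zero_right]
  rw [inner_sub_right, inner_smul_right, inner_smul_right, o1, o2] at h2
  exact he0 (hperp e0 (by simpa using h2))

end Abstract

abbrev Circ := AddCircle (2 * Real.pi)
noncomputable abbrev νC : Measure Circ := AddCircle.haarAddCircle
noncomputable abbrev LC := Lp ℂ 2 νC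

noncomputable def eL (n : ℤ) : LC := fourierLp 2 n

lemma coef_eq (g : LC) (n : ℤ) : fourierCoeff (g : Circ → ℂ) n = inner ℂ (eL n) g := by
  rw [← fourierBasis_repr, HilbertBasis.repr_apply_apply, coe_fourierBasis, eL]

lemma eL_orth (m n : ℤ) : inner ℂ (eL m) (eL n) = if m = n then (1 : ℂ) else 0 :=
  orthonormal_iff_ite.1 (orthonormal_fourier (T := 2 * Real.pi)) m n

lemma eL_norm (n : ℤ) : ‖eL n‖ = 1 := (orthonormal_fourier (T := 2 * Real.pi)).1 n

lemma eL_hasSum (g : LC) : HasSum (fun i => inner ℂ (eL i) g • eL i) g := by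
  have h := hasSum_fourier_series_L2 g
  simp only [coef_eq] at h
  exact h

lemma eL_ext {g h : LC} (H : ∀ n, inner ℂ (eL n) g = inner ℂ (eL n) h) : g = h := by
  have h1 := eL_hasSum g
  simp only [H] at h1
  exact h1.unique (eL_hasSum h)

/-- multiplication operator by a bounded measurable function -/
lemma exists_mulOp (φ : Circ → ℂ) (hm : Measurable φ) (hb : ∃ C : ℝ, ∀ x, ‖φ x‖ ≤ C) :
    ∃ M : LC →L[ℂ] LC, ∀ g : LC, (M g : Circ → ℂ) =ᵐ[νC] fun x => φ x * g x := by
  obtain ⟨C, hC⟩ := hb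
  have hL : MemLp φ ⊤ νC := memLp_top_of_bound hm.aestronglyMeasurable C (.of_forall hC)
  refine ⟨(ContinuousLinearMap.mul ℂ ℂ).holderL νC ⊤ 2 2 hL.toLp, fun g => ?_⟩
  have h1 := (ContinuousLinearMap.mul ℂ ℂ).coeFn_holder (r := 2) hL.toLp g
  filter_upwards [h1, hL.coeFn_toLp] with x hx hx2
  rw [ContinuousLinearMap.holderL_apply_apply, hx, hx2]
  rfl

lemma mulOp_eL {φ : Circ → ℂ} {M : LC →L[ℂ] LC}
    (hM : ∀ g : LC, (M g : Circ → ℂ) =ᵐ[νC] fun x => φ x * g x) (n k : ℤ) :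
    inner ℂ (eL n) (M (eL k)) = fourierCoeff φ (n - k) := by
  rw [← coef_eq]
  unfold fourierCoeff
  refine integral_congr_ae ?_
  filter_upwards [hM (eL k), coeFn_fourierLp (T := 2 * Real.pi) 2 k] with x h1 h2
  have h2' : (eL k : Circ → ℂ) x = fourier k x := h2
  rw [h1, h2', neg_sub, sub_eq_add_neg, fourier_add]
  simp only [smul_eq_mul]
  ring

lemma mulOp_conv {φ : Circ → ℂ} {M : LC →L[ℂ] LC}
    (hM : ∀ g : LC, (M g : Circ → ℂ) =ᵐ[νC] fun x => φ x * g x) (h : LC) (n : ℤ) :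
    HasSum (fun k : ℤ => inner ℂ (eL k) h * fourierCoeff φ (n - k)) (inner ℂ (eL n) (M h)) := by
  have h1 := (eL_hasSum h).mapL ((innerSL ℂ (eL n)).comp M)
  simp only [ContinuousLinearMap.comp_apply, map_smul, innerSL_apply_apply, mulOp_eL hM,
    smul_eq_mul] at h1
  exact h1

lemma mulOp_pow {φ : Circ → ℂ} {M : LC →L[ℂ] LC}
    (hM : ∀ g : LC, (M g : Circ → ℂ) =ᵐ[νC] fun x => φ x * g x) (k : ℕ) (g : LC) :
    ((M ^ k) g : Circ → ℂ) =ᵐ[νC] fun x => φ x ^ k * g x := by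
  induction k with
  | zero => simp
  | succ k ih =>
    have h : (M ^ (k + 1)) g = M ((M ^ k) g) := by rw [pow_succ']; rfl
    rw [h]
    filter_upwards [ih, hM ((M ^ k) g)] with x h1 h2
    rw [h2, h1]; ring

noncomputable def HardyS : Submodule ℂ LC where
  carrier := {g | ∀ n : ℤ, n < 0 → inner ℂ (eL n) g = 0}
  add_mem' := fun {a b} ha hb n hn => by rw [inner_add_right, ha n hn, hb n hn, add_zero]
  zero_mem' := fun n _ => inner_zero_right _
  smul_mem' := fun c x hx n hn => by rw [inner_smul_right, hx n hn, mul_zero]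

lemma mem_HardyS (g : LC) : g ∈ HardyS ↔ ∀ n : ℤ, n < 0 → inner ℂ (eL n) g = 0 := Iff.rfl

lemma HardyS_closed : IsClosed (HardyS : Set LC) := by
  have : (HardyS : Set LC) = ⋂ n : ℤ, ⋂ _ : n < 0, {g | inner ℂ (eL n) g = 0} := by
    ext g; simp [mem_HardyS]
  rw [this]
  refine isClosed_iInter fun n => isClosed_iInter fun _ => ?_
  exact isClosed_eq (by fun_prop) continuous_const

lemma eL_mem {n : ℤ} (hn : 0 ≤ n) : eL n ∈ HardyS := by
  intro k hk
  rw [eL_orth, if_neg (by omega)]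

lemma mulOp_mem {φ : Circ → ℂ} {M : LC →L[ℂ] LC}
    (hM : ∀ g : LC, (M g : Circ → ℂ) =ᵐ[νC] fun x => φ x * g x)
    (hφ : ∀ n : ℤ, n < 0 → fourierCoeff φ n = 0) {h : LC} (hh : h ∈ HardyS) : M h ∈ HardyS := by
  intro n hn
  refine (mulOp_conv hM h n).unique ?_
  convert hasSum_zero with k
  by_cases hk : k < 0
  · rw [hh k hk, zero_mul]
  · rw [hφ _ (by omega), mul_zero]

lemma mulOp_coef_zero {φ : Circ → ℂ} {M : LC →L[ℂ] LC}
    (hM : ∀ g : LC, (M g : Circ → ℂ) =ᵐ[νC] fun x => φ x * g x)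
    (hφ : ∀ n : ℤ, n < 0 → fourierCoeff φ n = 0) {h : LC} (hh : h ∈ HardyS) :
    inner ℂ (eL 0) (M h) = fourierCoeff φ 0 * inner ℂ (eL 0) h := by
  refine (mulOp_conv hM h 0).unique ?_
  have := hasSum_single (f := fun k : ℤ => inner ℂ (eL k) h * fourierCoeff φ (0 - k)) 0 (by
    intro k hk
    by_cases hk : k < 0
    · rw [hh k hk, zero_mul]
    · rw [hφ _ (by omega), mul_zero])
  simpa [mul_comm] using this

lemma exists_least (a : ℤ → ℂ) (ha : ∀ n < 0, a n = 0) (hne : ∃ n, a n ≠ 0) :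
    ∃ m, a m ≠ 0 ∧ ∀ k < m, a k = 0 := by
  obtain ⟨m, h1, h2⟩ := Int.exists_least_of_bdd (P := fun n => a n ≠ 0)
    ⟨0, fun z hz => by
      by_contra hlt
      exact hz (ha z (by omega))⟩ hne
  refine ⟨m, h1, fun k hk => ?_⟩
  by_contra h
  have := h2 k h
  omega

/-- either `φ - λ` acts injectively on `H²`, or `φ` acts as the scalar `λ`. -/
lemma mulOp_inj {φ : Circ → ℂ} {M : LC →L[ℂ] LC}
    (hM : ∀ g : LC, (M g : Circ → ℂ) =ᵐ[νC] fun x => φ x * g x)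
    (hφ : ∀ n : ℤ, n < 0 → fourierCoeff φ n = 0) {h : LC} (hh : h ∈ HardyS)
    (hMh : M h = fourierCoeff φ 0 • h) (hne : h ≠ 0) (g : LC) :
    M g = fourierCoeff φ 0 • g := by
  obtain ⟨m, hm1, hm2⟩ := exists_least (fun n => inner ℂ (eL n) h) hh (by
    by_contra! H
    exact hne (eL_ext fun n => by rw [H n, inner_zero_right]))
  have hz : ∀ n, n ≠ 0 → fourierCoeff φ n = 0 := by
    by_contra! H
    obtain ⟨n, hn0, hn⟩ := H
    obtain ⟨j, hj1, hj2⟩ := exists_least (fun n => if n = 0 then 0 else fourierCoeff φ n)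
      (fun n hn => by simp [hφ n hn]) ⟨n, by simpa [hn0] using hn⟩
    have hj0 : j ≠ 0 := by
      rintro rfl
      simp at hj1
    simp only [hj0, if_false] at hj1
    have hmid : ∀ i, i ≠ 0 → i < j → fourierCoeff φ i = 0 := by
      intro i hi hij
      simpa [hi] using hj2 i hij
    have h1 := mulOp_conv hM h (m + j)
    have h2 := hasSum_sum_of_ne_finset_zero (L := .unconditional ℤ)
      (f := fun k : ℤ => inner ℂ (eL k) h * fourierCoeff φ (m + j - k)) (s := {m, m + j}) (by
        intro k hk
        simp only [Finset.mem_insert, Finset.mem_singleton, not_or] at hk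
        rcases lt_or_gt_of_ne hk.1 with hlt | hgt
        · have := hm2 k hlt
          rw [this, zero_mul]
        · rw [hmid _ (by omega) (by omega), mul_zero])
    have h3 := h1.unique h2
    rw [hMh, inner_smul_right, Finset.sum_pair (by omega), sub_self, add_sub_cancel_left,
      mul_comm (fourierCoeff φ 0)] at h3
    have h4 : inner ℂ (eL m) h * fourierCoeff φ j = 0 := by linear_combination -h3
    rcases mul_eq_zero.1 h4 with h5 | h5
    · exact hm1 h5
    · exact hj1 h5
  refine eL_ext fun n => (mulOp_conv hM g n).unique ?_
  have := hasSum_single (f := fun k : ℤ => inner ℂ (eL k) g * fourierCoeff φ (n - k)) n (by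
    intro k hk
    rw [hz _ (by omega), mul_zero])
  simpa [inner_smul_right, mul_comm] using this

lemma norm_eq_of_ae {g h : LC} (H : ∀ᵐ x ∂νC, ‖g x‖ = ‖h x‖) : ‖g‖ = ‖h‖ :=
  le_antisymm (Lp.norm_le_norm_of_ae_le (H.mono fun _ hx => hx.le))
    (Lp.norm_le_norm_of_ae_le (H.mono fun _ hx => hx.ge))

lemma fourier_norm_apply (N : ℤ) (x : Circ) : ‖(fourier N x : ℂ)‖ = 1 := by
  rw [fourier_apply]; exact Circle.norm_coe _

/-- from bounds on `H²` to bounds on `L²`. -/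
lemma extend_bounds {φ : Circ → ℂ} {M : LC →L[ℂ] LC}
    (hM : ∀ g : LC, (M g : Circ → ℂ) =ᵐ[νC] fun x => φ x * g x) (K : ℝ) (k : ℕ)
    (H : ∀ h ∈ HardyS, ‖h‖ ≤ K * ‖(M ^ k) h‖ ∧ ‖(M ^ k) h‖ ≤ K * ‖h‖) (h : LC) :
    ‖h‖ ≤ K * ‖(M ^ k) h‖ ∧ ‖(M ^ k) h‖ ≤ K * ‖h‖ := by
  have hcl : IsClosed {h : LC | ‖h‖ ≤ K * ‖(M ^ k) h‖ ∧ ‖(M ^ k) h‖ ≤ K * ‖h‖} :=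
    IsClosed.and (isClosed_le (by fun_prop) (by fun_prop)) (isClosed_le (by fun_prop) (by fun_prop))
  refine hcl.mem_of_tendsto (eL_hasSum h) (.of_forall fun s => ?_)
  set p : LC := ∑ i ∈ s, inner ℂ (eL i) h • eL i with hp
  set N : ℤ := ∑ i ∈ s, |i| with hN
  obtain ⟨E, hE⟩ := exists_mulOp (fun x => fourier N x) (by fun_prop)
    ⟨1, fun x => (fourier_norm_apply N x).le⟩
  have hEe : ∀ i, E (eL i) = eL (N + i) := by
    intro i
    refine Lp.ext ?_
    filter_upwards [hE (eL i), coeFn_fourierLp (T := 2 * Real.pi) 2 i,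
      coeFn_fourierLp (T := 2 * Real.pi) 2 (N + i)] with x h1 h2 h3
    have h2' : (eL i : Circ → ℂ) x = fourier i x := h2
    have h3' : (eL (N + i) : Circ → ℂ) x = fourier (N + i) x := h3
    rw [h1, h2', h3', fourier_add]
  have hmem : E p ∈ HardyS := by
    rw [hp, map_sum]
    refine Submodule.sum_mem _ fun i hi => ?_
    rw [map_smul, hEe]
    refine Submodule.smul_mem _ _ (eL_mem ?_)
    have : |i| ≤ N := Finset.single_le_sum (f := fun i : ℤ => |i|) (fun _ _ => abs_nonneg _) hi
    have := neg_abs_le i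
    omega
  have n1 : ‖E p‖ = ‖p‖ := norm_eq_of_ae (by
    filter_upwards [hE p] with x hx
    rw [hx, norm_mul, fourier_norm_apply, one_mul])
  have n2 : ‖(M ^ k) (E p)‖ = ‖(M ^ k) p‖ := norm_eq_of_ae (by
    filter_upwards [hE p, mulOp_pow hM k p, mulOp_pow hM k (E p)] with x h1 h2 h3
    rw [h3, h2, h1, norm_mul, norm_mul, norm_mul, fourier_norm_apply, one_mul])
  have := H _ hmem
  rwa [n1, n2] at this

lemma null_of_norm {s : Set Circ} (hs : MeasurableSet s)
    (h : ‖indicatorConstLp 2 hs (measure_ne_top νC s) (1 : ℂ)‖ = 0) : ∀ᵐ x ∂νC, x ∉ s := by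
  rw [norm_indicatorConstLp (by norm_num) (by norm_num)] at h
  rw [← measure_eq_zero_iff_ae_notMem]
  simp only [norm_one, one_mul] at h
  rw [Real.rpow_eq_zero measureReal_nonneg (by norm_num)] at h
  rwa [measureReal_eq_zero_iff] at h

lemma ae_one_of_bounds {φ : Circ → ℂ} (hm : Measurable φ) {M : LC →L[ℂ] LC}
    (hM : ∀ g : LC, (M g : Circ → ℂ) =ᵐ[νC] fun x => φ x * g x) (K : ℝ)
    (H : ∀ (k : ℕ) (h : LC), ‖h‖ ≤ K * ‖(M ^ k) h‖ ∧ ‖(M ^ k) h‖ ≤ K * ‖h‖) :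
    ∀ᵐ x ∂νC, ‖φ x‖ = 1 := by
  have hpos : ∀ r : ℝ, 1 < r → ∀ t : ℝ, 0 ≤ t → (∀ k : ℕ, r ^ k * t ≤ K * t) → t = 0 := by
    intro r hr t ht hk
    by_contra hne
    have htp : 0 < t := lt_of_le_of_ne ht (Ne.symm hne)
    obtain ⟨k, hk2⟩ := pow_unbounded_of_one_lt K hr
    have := le_of_mul_le_mul_right (hk k) htp
    linarith
  have hup : ∀ r : ℝ, 1 < r → ∀ᵐ x ∂νC, x ∉ {x | r ≤ ‖φ x‖} := by
    intro r hr
    have hs : MeasurableSet {x | r ≤ ‖φ x‖} := measurableSet_le measurable_const hm.norm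
    refine null_of_norm hs (hpos r hr _ (norm_nonneg _) fun k => ?_)
    set h := indicatorConstLp 2 hs (measure_ne_top νC _) (1 : ℂ) with hh
    refine le_trans ?_ (H k h).2
    have hr0 : 0 ≤ r ^ k := by positivity
    have : ‖((r : ℂ) ^ k) • h‖ ≤ ‖(M ^ k) h‖ := by
      refine Lp.norm_le_norm_of_ae_le ?_
      filter_upwards [mulOp_pow hM k h, Lp.coeFn_smul ((r : ℂ) ^ k) h,
        indicatorConstLp_coeFn (p := 2) (hs := hs) (hμs := measure_ne_top νC _) (c := (1 : ℂ))]
        with x h1 h2 h3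
      rw [h1, h2, Pi.smul_apply, smul_eq_mul, norm_mul, norm_mul]
      rw [← hh] at h3
      rw [h3]
      by_cases hx : x ∈ {x | r ≤ ‖φ x‖}
      · rw [Set.indicator_of_mem hx]
        simp only [norm_pow, Complex.norm_real, norm_one, mul_one]
        rw [Real.norm_of_nonneg (by linarith)]
        exact pow_le_pow_left₀ (by linarith) hx k
      · rw [Set.indicator_of_notMem hx]; simp
    rw [norm_smul, norm_pow, Complex.norm_real, Real.norm_of_nonneg (by linarith)] at this
    exact this
  have hlow : ∀ r : ℝ, 1 < r → ∀ᵐ x ∂νC, x ∉ {x | r * ‖φ x‖ ≤ 1} := by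
    intro r hr
    have hs : MeasurableSet {x | r * ‖φ x‖ ≤ 1} :=
      measurableSet_le (hm.norm.const_mul r) measurable_const
    refine null_of_norm hs (hpos r hr _ (norm_nonneg _) fun k => ?_)
    set h := indicatorConstLp 2 hs (measure_ne_top νC _) (1 : ℂ) with hh
    have h0 := (H k h).1
    have hr0 : 0 ≤ r ^ k := by positivity
    have : ‖((r : ℂ) ^ k) • (M ^ k) h‖ ≤ ‖h‖ := by
      refine Lp.norm_le_norm_of_ae_le ?_
      filter_upwards [mulOp_pow hM k h, Lp.coeFn_smul ((r : ℂ) ^ k) ((M ^ k) h),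
        indicatorConstLp_coeFn (p := 2) (hs := hs) (hμs := measure_ne_top νC _) (c := (1 : ℂ))]
        with x h1 h2 h3
      rw [h2, Pi.smul_apply, h1, smul_eq_mul, norm_mul, norm_mul]
      rw [← hh] at h3
      rw [h3]
      by_cases hx : x ∈ {x | r * ‖φ x‖ ≤ 1}
      · rw [Set.indicator_of_mem hx]
        simp only [norm_pow, Complex.norm_real, norm_one, mul_one]
        rw [Real.norm_of_nonneg (by linarith), ← mul_pow]
        exact pow_le_one₀ (by positivity) hx
      · rw [Set.indicator_of_notMem hx]; simp
    rw [norm_smul, norm_pow, Complex.norm_real, Real.norm_of_nonneg (by linarith)] at this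
    by_cases hK : 0 ≤ K
    · nlinarith [mul_le_mul_of_nonneg_left this hK, mul_le_mul_of_nonneg_left h0 hr0]
    · have hz : ‖h‖ = 0 := by nlinarith [norm_nonneg h, norm_nonneg ((M ^ k) h)]
      rw [hz]; simp
  have hseq : ∀ n : ℕ, (1 : ℝ) < 1 + 1 / ((n : ℝ) + 1) := fun n => by
    have : (0 : ℝ) < 1 / ((n : ℝ) + 1) := by positivity
    linarith
  filter_upwards [ae_all_iff.2 fun n : ℕ => hup _ (hseq n),
    ae_all_iff.2 fun n : ℕ => hlow _ (hseq n)] with x h1 h2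
  simp only [not_le] at h1 h2
  apply le_antisymm
  · by_contra! hlt
    obtain ⟨n, hn⟩ := exists_nat_one_div_lt (sub_pos.2 hlt)
    have := h1 n
    linarith
  · by_contra! hlt
    obtain ⟨n, hn⟩ := exists_nat_one_div_lt (sub_pos.2 hlt)
    have := h2 n
    have h3 : (0 : ℝ) < 1 / ((n : ℝ) + 1) := by positivity
    nlinarith [norm_nonneg (φ x)]

theorem main_aux (φ : Circ → ℂ) (hφmeas : Measurable φ)
    (hφbdd : ∃ C : ℝ, ∀ x, ‖φ x‖ ≤ C)
    (hφH : ∀ n : ℤ, n < 0 → fourierCoeff φ n = 0)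
    (f : LC) (hf : ∀ n : ℤ, n < 0 → fourierCoeff (f : Circ → ℂ) n = 0)
    (A B : ℝ) (hA : 0 < A)
    (hframe : ∀ g : LC, (∀ n : ℤ, n < 0 → fourierCoeff (g : Circ → ℂ) n = 0) →
      A * ‖g‖ ^ 2 ≤ ∑' n : ℕ,
          ‖∫ x, (g : Circ → ℂ) x * conj (φ x ^ n * (f : Circ → ℂ) x) ∂νC‖ ^ 2 ∧
        ∑' n : ℕ,
          ‖∫ x, (g : Circ → ℂ) x * conj (φ x ^ n * (f : Circ → ℂ) x) ∂νC‖ ^ 2 ≤ B * ‖g‖ ^ 2) :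
    ∀ᵐ x ∂νC, ‖φ x‖ = 1 := by
  obtain ⟨M, hM⟩ := exists_mulOp φ hφmeas hφbdd
  have hfm : f ∈ HardyS := fun n hn => by rw [← coef_eq]; exact hf n hn
  have hint : ∀ (g : LC) (n : ℕ), ∫ x, (g : Circ → ℂ) x * conj (φ x ^ n * (f : Circ → ℂ) x) ∂νC
      = inner ℂ ((M ^ n) f) g := by
    intro g n
    rw [L2.inner_def]
    refine integral_congr_ae ?_
    filter_upwards [mulOp_pow hM n f] with x hx
    rw [hx]
    simp [mul_comm]
  have : CompleteSpace HardyS := HardyS_closed.completeSpace_coe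
  let T : HardyS →L[ℂ] HardyS := (M.comp HardyS.subtypeL).codRestrict HardyS
    (fun x => mulOp_mem hM hφH x.2)
  have hT : ∀ x : HardyS, ((T x : HardyS) : LC) = M x := fun x => rfl
  have hTk : ∀ (k : ℕ) (x : HardyS), (((T ^ k) x : HardyS) : LC) = (M ^ k) (x : LC) := by
    intro k x
    induction k with
    | zero => rfl
    | succ k ih =>
      have e1 : (T ^ (k + 1)) x = T ((T ^ k) x) := by rw [pow_succ']; rfl
      have e2 : (M ^ (k + 1)) (x : LC) = M ((M ^ k) (x : LC)) := by rw [pow_succ']; rfl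
      rw [e1, e2, hT, ih]
  let v : HardyS := ⟨f, hfm⟩
  have hin : ∀ (g : HardyS) (n : ℕ), inner ℂ ((T ^ n) v) g = inner ℂ ((M ^ n) f) (g : LC) := by
    intro g n
    rw [Submodule.coe_inner, hTk]
  have hfr : ∀ g : HardyS, A * ‖g‖ ^ 2 ≤ ∑' n : ℕ, ‖inner ℂ ((T ^ n) v) g‖ ^ 2 ∧
      ∑' n : ℕ, ‖inner ℂ ((T ^ n) v) g‖ ^ 2 ≤ B * ‖g‖ ^ 2 := by
    intro g
    have h := hframe g (fun n hn => by rw [coef_eq]; exact g.2 n hn)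
    simp only [hint] at h
    simp only [hin]
    exact h
  have hs : ∀ g : HardyS, Summable fun n : ℕ => ‖inner ℂ ((T ^ n) v) g‖ ^ 2 := by
    intro g
    by_cases hg : g = 0
    · subst hg
      simp
    · by_contra hns
      have h := (hfr g).1
      rw [tsum_eq_zero_of_not_summable hns] at h
      have : 0 < A * ‖g‖ ^ 2 := mul_pos hA (pow_pos (norm_pos_iff.2 hg) 2)
      linarith
  let e0 : HardyS := ⟨eL 0, eL_mem le_rfl⟩
  let e1 : HardyS := ⟨eL 1, eL_mem (by norm_num)⟩
  have he0 : e0 ≠ 0 := by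
    intro h
    have h' : eL 0 = 0 := congrArg Subtype.val h
    have := eL_norm 0
    rw [h', norm_zero] at this
    exact zero_ne_one this
  have hinj : ∀ h : HardyS, T h = fourierCoeff φ 0 • h → h = 0 := by
    intro h hh
    by_contra hne
    have hsc := mulOp_inj hM hφH h.2 (congrArg Subtype.val hh) (fun h0 => hne (Subtype.ext h0))
    have o1 : inner ℂ e1 e0 = (0 : ℂ) := by
      rw [Submodule.coe_inner]; exact (eL_orth 1 0).trans (by simp)
    have o2 : inner ℂ e1 e1 = (1 : ℂ) := by
      rw [Submodule.coe_inner]; exact (eL_orth 1 1).trans (by simp)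
    exact scalar_contra T v A hA (fun g => (hfr g).1) (fourierCoeff φ 0) (Subtype.ext (hsc f))
      e0 e1 he0 o1 o2
  obtain ⟨K, -, hK⟩ := frame_bounds T v A B hA hs (fun g => (hfr g).1) (fun g => (hfr g).2)
    e0 he0 (fourierCoeff φ 0) (fun h => by
      rw [Submodule.coe_inner, Submodule.coe_inner]
      exact mulOp_coef_zero hM hφH h.2) hinj
  refine ae_one_of_bounds hφmeas hM K fun k => extend_bounds hM K k fun h hh => ?_
  have := hK k ⟨h, hh⟩
  rw [Submodule.coe_norm, Submodule.coe_norm, hTk] at this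
  exact this

theorem stmt11 (φ : AddCircle (2 * Real.pi) → ℂ) (hφmeas : Measurable φ)
    (hφbdd : ∃ C : ℝ, ∀ x, ‖φ x‖ ≤ C)
    (hφH : ∀ n : ℤ, n < 0 → fourierCoeff φ n = 0)
    (f : Lp ℂ 2 μC)
    (hf : ∀ n : ℤ, n < 0 → fourierCoeff (f : AddCircle (2 * Real.pi) → ℂ) n = 0)
    (A B : ℝ) (hA : 0 < A) (hB : 0 < B)
    (hframe : ∀ g : Lp ℂ 2 μC,
      (∀ n : ℤ, n < 0 → fourierCoeff (g : AddCircle (2 * Real.pi) → ℂ) n = 0) →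
      A * ‖g‖ ^ 2 ≤ ∑' n : ℕ,
          ‖∫ x, (g : AddCircle (2 * Real.pi) → ℂ) x *
            conj (φ x ^ n * (f : AddCircle (2 * Real.pi) → ℂ) x) ∂μC‖ ^ 2 ∧
        ∑' n : ℕ,
          ‖∫ x, (g : AddCircle (2 * Real.pi) → ℂ) x *
            conj (φ x ^ n * (f : AddCircle (2 * Real.pi) → ℂ) x) ∂μC‖ ^ 2 ≤ B * ‖g‖ ^ 2) :
    ∀ᵐ x ∂μC, ‖φ x‖ = 1 := by
  exact main_aux φ hφmeas hφbdd hφH f hf A B hA hframe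
end

section
/- Let μ be the normalized Haar measure on the circle 𝕋 = AddCircle (2π), let L² = L²(𝕋, μ; ℂ), and let H² = {g ∈ L² : the n-th Fourier coefficient of g vanishes for every integer n < 0}. Let φ : 𝕋 → ℂ be measurable with |φ(x)| ≤ r for μ-a.e. x, for some r < 1. Then for every f ∈ H², the family (φⁿ · f)_{n∈ℕ} of a.e. pointwise products is not a frame for H²: no positive lower frame bound exists. -/
open MeasureTheory Real ComplexConjugate

open AddCircle Filter Topology

theorem aux_coeff (k : ℕ) (n : ℤ) (hn : n < 0) :
    fourierCoeff ((fourierLp 2 (k : ℤ) : Lp ℂ 2 (haarAddCircle (T := 2 * Real.pi))) :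
      AddCircle (2 * Real.pi) → ℂ) n = 0 := by
  rw [← fourierBasis_repr, ← coe_fourierBasis, HilbertBasis.repr_self]
  rw [lp.single_apply_ne]
  omega

theorem aux_int (k : ℕ) (h : AddCircle (2 * Real.pi) → ℂ) :
    ‖∫ x, ((fourierLp 2 (k : ℤ) : Lp ℂ 2 (haarAddCircle (T := 2 * Real.pi))) :
      AddCircle (2 * Real.pi) → ℂ) x * conj (h x) ∂haarAddCircle‖ = ‖fourierCoeff h k‖ := by
  rw [fourierCoeff, ← RCLike.norm_conj, ← integral_conj]
  congr 1
  apply integral_congr_ae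
  filter_upwards [coeFn_fourierLp (T := 2 * Real.pi) 2 (k : ℤ)] with x hx
  rw [hx, fourier_neg]
  simp

theorem aux_tendsto (h : AddCircle (2 * Real.pi) → ℂ) (hh : MemLp h 2 haarAddCircle) :
    Tendsto (fun k : ℕ => ‖fourierCoeff h k‖ ^ 2) atTop (𝓝 0) := by
  have h1 := (hasSum_sq_fourierCoeff hh.toLp).summable
  rw [fourierCoeff_congr_ae hh.coeFn_toLp] at h1
  exact (h1.comp_injective Nat.cast_injective).tendsto_atTop_zero

theorem aux_bound (h : AddCircle (2 * Real.pi) → ℂ) (k : ℕ) :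
    ‖fourierCoeff h k‖ ≤ ∫ x, ‖h x‖ ∂haarAddCircle := by
  rw [fourierCoeff]
  refine (norm_integral_le_integral_norm _).trans (le_of_eq ?_)
  congr 1
  ext x
  rw [norm_smul, fourier_apply, Circle.norm_coe, one_mul]

theorem aux_main (φ : AddCircle (2 * Real.pi) → ℂ) (hφmeas : Measurable φ)
    (r : ℝ) (hr : r < 1) (hφr : ∀ᵐ x ∂haarAddCircle, ‖φ x‖ ≤ r)
    (f : AddCircle (2 * Real.pi) → ℂ) (hf : MemLp f 2 haarAddCircle) :
    Tendsto (fun k : ℕ => ∑' n : ℕ, ‖fourierCoeff (fun x => φ x ^ n * f x) k‖ ^ 2)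
      atTop (𝓝 0) := by
  have hr0 : 0 ≤ r := by
    obtain ⟨x, hx⟩ := hφr.exists
    exact (norm_nonneg _).trans hx
  have hpow : ∀ n : ℕ, ∀ᵐ x ∂haarAddCircle, ‖φ x ^ n * f x‖ ≤ r ^ n * ‖f x‖ := by
    intro n
    filter_upwards [hφr] with x hx
    rw [norm_mul, norm_pow]
    gcongr
  have hmem : ∀ n : ℕ, MemLp (fun x => φ x ^ n * f x) 2 haarAddCircle := fun n =>
    hf.of_le_mul ((hφmeas.pow_const n).aestronglyMeasurable.mul hf.1) (hpow n)
  have hfInt : Integrable f haarAddCircle := hf.integrable (by norm_num)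
  have hb : ∀ k n : ℕ, ‖‖fourierCoeff (fun x => φ x ^ n * f x) k‖ ^ 2‖ ≤
      (r ^ 2) ^ n * (∫ x, ‖f x‖ ∂haarAddCircle) ^ 2 := by
    intro k n
    have h1 : ‖fourierCoeff (fun x => φ x ^ n * f x) k‖ ≤
        r ^ n * ∫ x, ‖f x‖ ∂haarAddCircle := by
      refine (aux_bound _ k).trans ?_
      rw [← integral_const_mul]
      exact integral_mono_ae ((hmem n).integrable (by norm_num)).norm
        (hfInt.norm.const_mul _) (hpow n)
    rw [Real.norm_of_nonneg (by positivity), ← pow_mul, mul_comm 2 n, pow_mul, ← mul_pow]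
    gcongr
  have := tendsto_tsum_of_dominated_convergence (𝓕 := atTop)
    (f := fun k n : ℕ => ‖fourierCoeff (fun x => φ x ^ n * f x) k‖ ^ 2) (g := fun _ => 0)
    (bound := fun n : ℕ => (r ^ 2) ^ n * (∫ x, ‖f x‖ ∂haarAddCircle) ^ 2)
    ((summable_geometric_of_lt_one (by positivity) (by nlinarith)).mul_right _)
    (fun n => aux_tendsto _ (hmem n)) (Eventually.of_forall hb)
  simpa using this

theorem stmt12 (φ : AddCircle (2 * Real.pi) → ℂ) (hφmeas : Measurable φ)
    (r : ℝ) (hr : r < 1) (hφr : ∀ᵐ x ∂μC, ‖φ x‖ ≤ r)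
    (f : Lp ℂ 2 μC)
    (hf : ∀ n : ℤ, n < 0 → fourierCoeff (f : AddCircle (2 * Real.pi) → ℂ) n = 0) :
    ¬ ∃ A : ℝ, 0 < A ∧ ∀ g : Lp ℂ 2 μC,
      (∀ n : ℤ, n < 0 → fourierCoeff (g : AddCircle (2 * Real.pi) → ℂ) n = 0) →
      A * ‖g‖ ^ 2 ≤ ∑' n : ℕ,
        ‖∫ x, (g : AddCircle (2 * Real.pi) → ℂ) x *
          conj (φ x ^ n * (f : AddCircle (2 * Real.pi) → ℂ) x) ∂μC‖ ^ 2 := by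
  rintro ⟨A, hA, h⟩
  have hlim := aux_main φ hφmeas r hr hφr f (Lp.memLp f)
  refine absurd (ge_of_tendsto' hlim (b := A) fun k => ?_) (not_le.mpr hA)
  have h1 := h (fourierLp 2 (k : ℤ)) (aux_coeff k)
  have hn : ‖(fourierLp 2 (k : ℤ) : Lp ℂ 2 (haarAddCircle (T := 2 * Real.pi)))‖ = 1 :=
    orthonormal_fourier.1 _
  have h2 : A * ‖(fourierLp 2 (k : ℤ) : Lp ℂ 2 (haarAddCircle (T := 2 * Real.pi)))‖ ^ 2 ≤
      ∑' n : ℕ, ‖∫ x, ((fourierLp 2 (k : ℤ) : Lp ℂ 2 (haarAddCircle (T := 2 * Real.pi))) :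
      AddCircle (2 * Real.pi) → ℂ) x *
        conj ((fun x => φ x ^ n * (f : AddCircle (2 * Real.pi) → ℂ) x) x) ∂haarAddCircle‖ ^ 2 := h1
  simp_rw [aux_int, hn] at h2
  simpa using h2
end

section
/- Let μ be the normalized Haar measure on the circle 𝕋 = AddCircle (2π), let L² = L²(𝕋, μ; ℂ), and let H² = {g ∈ L² : the n-th Fourier coefficient of g vanishes for every integer n < 0}. Let φ : 𝕋 → ℂ be a bounded measurable function whose Fourier coefficients vanish for all integers n < 0, and let f ∈ H². If the family (φⁿ · f)_{n∈ℕ} of a.e. pointwise products is a frame for H², then the holomorphic extension of f has no zeros in the open unit disk: for every z₀ ∈ ℂ with |z₀| < 1, the sum ∑_{n=0}^∞ (n-th Fourier coefficient of f) · z₀ⁿ is nonzero. -/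
open MeasureTheory Real ComplexConjugate

section Helpers

open AddCircle Filter Topology

/-- Conjugate of the reproducing (Szegő) kernel at `z`. -/
noncomputable def kerC (z : ℂ) (x : AddCircle (2 * Real.pi)) : ℂ :=
  (1 - z * fourier (-1) x)⁻¹

theorem norm_fourier_pt (n : ℤ) (x : AddCircle (2 * Real.pi)) :
    ‖(fourier n x : ℂ)‖ = 1 := by
  rw [fourier_apply, Circle.norm_coe]

theorem ker_den_ne {z : ℂ} (hz : ‖z‖ < 1) (x : AddCircle (2 * Real.pi)) :
    (1 - z * fourier (-1) x : ℂ) ≠ 0 := by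
  intro h
  have h1 : z * fourier (-1) x = 1 := (sub_eq_zero.mp h).symm
  have h2 := congrArg norm h1
  rw [norm_mul, norm_fourier_pt] at h2
  simp at h2
  linarith

theorem ker_cont {z : ℂ} (hz : ‖z‖ < 1) : Continuous (kerC z) := by
  unfold kerC
  refine Continuous.inv₀ ?_ (ker_den_ne hz)
  exact continuous_const.sub (continuous_const.mul (map_continuous (fourier (-1))))

theorem ker_rec {z : ℂ} (hz : ‖z‖ < 1) (x : AddCircle (2 * Real.pi)) :
    kerC z x = 1 + z * fourier (-1) x * kerC z x := by
  have h := ker_den_ne hz x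
  unfold kerC
  field_simp
  ring

theorem ker_memLp {z : ℂ} (hz : ‖z‖ < 1) (p : ENNReal) :
    MemLp (kerC z) p (haarAddCircle (T := 2 * Real.pi)) := by
  have : MemLp (kerC z) ⊤ (haarAddCircle (T := 2 * Real.pi)) := by
    obtain ⟨C, hC⟩ := (isCompact_range (ker_cont hz)).isBounded.exists_norm_le
    exact memLp_top_of_bound (ker_cont hz).aestronglyMeasurable C
      (ae_of_all _ fun x => hC _ ⟨x, rfl⟩)
  exact this.mono_exponent le_top

theorem mul_ker_memLp {z : ℂ} (hz : ‖z‖ < 1) {h : AddCircle (2 * Real.pi) → ℂ} {p : ENNReal}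
    (hh : MemLp h p (haarAddCircle (T := 2 * Real.pi))) :
    MemLp (fun x => h x * kerC z x) p (haarAddCircle (T := 2 * Real.pi)) :=
  (ker_memLp hz ⊤).mul' hh

theorem norm_coeff_le (h : AddCircle (2 * Real.pi) → ℂ) (n : ℤ) :
    ‖fourierCoeff h n‖ ≤ ∫ x, ‖h x‖ ∂(haarAddCircle (T := 2 * Real.pi)) := by
  unfold fourierCoeff
  refine (norm_integral_le_integral_norm _).trans (le_of_eq ?_)
  congr 1
  ext x
  rw [norm_smul, norm_fourier_pt, one_mul]

theorem coeff_rec {z : ℂ} (hz : ‖z‖ < 1) {h : AddCircle (2 * Real.pi) → ℂ}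
    (hh : MemLp h 1 (haarAddCircle (T := 2 * Real.pi))) (n : ℤ) :
    fourierCoeff (fun x => h x * kerC z x) n =
      fourierCoeff h n + z * fourierCoeff (fun x => h x * kerC z x) (n + 1) := by
  have i1 := (memLp_one_iff_integrable.mp hh).fourier_smul (-n)
  have i2 := (memLp_one_iff_integrable.mp (mul_ker_memLp hz hh)).fourier_smul (-(n+1))
  unfold fourierCoeff
  rw [← integral_const_mul, ← integral_add i1 (i2.const_mul z)]
  congr 1
  ext x
  have e : (fourier (-(n+1)) x : ℂ) = fourier (-n) x * fourier (-1) x := by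
    rw [← fourier_add]; congr 2; ring
  rw [e]
  simp only [smul_eq_mul]
  linear_combination (fourier (-n) x : ℂ) * h x * ker_rec hz x

theorem coeff_iter {z : ℂ} (hz : ‖z‖ < 1) {h : AddCircle (2 * Real.pi) → ℂ}
    (hh : MemLp h 1 (haarAddCircle (T := 2 * Real.pi))) (n : ℤ) (N : ℕ) :
    fourierCoeff (fun x => h x * kerC z x) n =
      ∑ j ∈ Finset.range N, fourierCoeff h (n + j) * z ^ j
        + z ^ N * fourierCoeff (fun x => h x * kerC z x) (n + N) := by
  induction N with
  | zero => simp
  | succ N ih =>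
    rw [ih, Finset.sum_range_succ, coeff_rec hz hh (n + N)]
    push_cast
    rw [← add_assoc n (N : ℤ) 1]
    ring

theorem coeff_hasSum {z : ℂ} (hz : ‖z‖ < 1) {h : AddCircle (2 * Real.pi) → ℂ}
    (hh : MemLp h 1 (haarAddCircle (T := 2 * Real.pi))) (n : ℤ) :
    ∑' j : ℕ, fourierCoeff h (n + j) * z ^ j = fourierCoeff (fun x => h x * kerC z x) n := by
  have hs : Summable fun j : ℕ => fourierCoeff h (n + j) * z ^ j := by
    refine Summable.of_norm_bounded
      ((summable_geometric_of_lt_one (norm_nonneg z) hz).mul_left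
        (∫ x, ‖h x‖ ∂(haarAddCircle (T := 2 * Real.pi)))) fun j => ?_
    rw [norm_mul, norm_pow]
    gcongr
    exact norm_coeff_le h _
  have h1 := hs.hasSum.tendsto_sum_nat
  refine tendsto_nhds_unique h1 ?_
  have h2 : Tendsto (fun N : ℕ => z ^ N * fourierCoeff (fun x => h x * kerC z x) (n + N))
      atTop (𝓝 0) := by
    refine squeeze_zero_norm (a := fun N : ℕ => ‖z‖ ^ N *
      (∫ x, ‖h x * kerC z x‖ ∂(haarAddCircle (T := 2 * Real.pi)))) (fun N => ?_) ?_
    · rw [norm_mul, norm_pow]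
      gcongr
      exact norm_coeff_le (fun x => h x * kerC z x) _
    · simpa using (tendsto_pow_atTop_nhds_zero_of_lt_one (norm_nonneg z) hz).mul_const
        (∫ x, ‖h x * kerC z x‖ ∂(haarAddCircle (T := 2 * Real.pi)))
  have h3 := h2.const_sub (fourierCoeff (fun x => h x * kerC z x) n)
  rw [sub_zero] at h3
  refine h3.congr fun N => ?_
  rw [coeff_iter hz hh n N]
  ring

theorem coeff_one (n : ℤ) :
    fourierCoeff (fun _ : AddCircle (2 * Real.pi) => (1 : ℂ)) n = if n = 0 then 1 else 0 := by
  have h := fourierCoeff_fourier (T := 2 * Real.pi) 0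
  have e : (⇑(fourier (T := 2 * Real.pi) 0) : AddCircle (2 * Real.pi) → ℂ) = fun _ => 1 := by
    ext x; simp
  rw [e] at h
  rw [h, Pi.single_apply]

theorem ker_coeff {z : ℂ} (hz : ‖z‖ < 1) {n : ℤ} (hn : 0 ≤ n) :
    fourierCoeff (kerC z) n = if n = 0 then 1 else 0 := by
  have h := coeff_hasSum hz (h := fun _ => 1) (memLp_const 1) n
  simp only [one_mul] at h
  change _ = fourierCoeff (kerC z) n at h
  rw [← h, tsum_eq_single 0]
  · simp [coeff_one]
  · intro j hj
    rw [coeff_one, if_neg (by omega), zero_mul]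

theorem coeff_conj (u : AddCircle (2 * Real.pi) → ℂ) (n : ℤ) :
    fourierCoeff (fun x => conj (u x)) n = conj (fourierCoeff u (-n)) := by
  unfold fourierCoeff
  rw [← integral_conj]
  congr 1
  ext x
  simp only [smul_eq_mul, map_mul, ← fourier_neg, neg_neg]

theorem int_mul_zero {u v : AddCircle (2 * Real.pi) → ℂ}
    (hu : MemLp u 2 (haarAddCircle (T := 2 * Real.pi)))
    (hv : MemLp v 2 (haarAddCircle (T := 2 * Real.pi)))
    (h0 : ∀ k : ℤ, fourierCoeff u (-k) = 0 ∨ fourierCoeff v k = 0) :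
    ∫ x, u x * v x ∂(haarAddCircle (T := 2 * Real.pi)) = 0 := by
  have hc : MemLp (fun x => conj (u x)) 2 (haarAddCircle (T := 2 * Real.pi)) := hu.star
  have h1 := (fourierBasis (T := 2 * Real.pi)).tsum_inner_mul_inner hc.toLp hv.toLp
  have h2 : inner ℂ hc.toLp hv.toLp = ∫ x, u x * v x ∂(haarAddCircle (T := 2 * Real.pi)) := by
    rw [MeasureTheory.L2.inner_def]
    apply integral_congr_ae
    filter_upwards [hc.coeFn_toLp, hv.coeFn_toLp] with x hx hy
    rw [hx, hy, RCLike.inner_apply']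
    simp
  rw [← h2, ← h1]
  convert tsum_zero with k
  rw [← inner_conj_symm, ← HilbertBasis.repr_apply_apply, ← HilbertBasis.repr_apply_apply,
    fourierBasis_repr, fourierBasis_repr, fourierCoeff_congr_ae hc.coeFn_toLp,
    fourierCoeff_congr_ae hv.coeFn_toLp, coeff_conj]
  rcases h0 k with h | h <;> simp [h]

theorem step {z : ℂ} (hz : ‖z‖ < 1) {φ h : AddCircle (2 * Real.pi) → ℂ}
    (hφ : MemLp φ ⊤ (haarAddCircle (T := 2 * Real.pi)))
    (hφH : ∀ n : ℤ, n < 0 → fourierCoeff φ n = 0)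
    (hh : MemLp h 2 (haarAddCircle (T := 2 * Real.pi)))
    (hH : ∀ n : ℤ, n < 0 → fourierCoeff h n = 0)
    (h0 : fourierCoeff (fun x => h x * kerC z x) 0 = 0) :
    MemLp (fun x => φ x * h x) 2 (haarAddCircle (T := 2 * Real.pi)) ∧
    (∀ n : ℤ, n < 0 → fourierCoeff (fun x => φ x * h x) n = 0) ∧
    fourierCoeff (fun x => (φ x * h x) * kerC z x) 0 = 0 := by
  have hφ2 : MemLp φ 2 (haarAddCircle (T := 2 * Real.pi)) := hφ.mono_exponent le_top
  have hh1 : MemLp h 1 (haarAddCircle (T := 2 * Real.pi)) := hh.mono_exponent (by norm_num)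
  refine ⟨hh.mul' hφ, fun n hn => ?_, ?_⟩
  · have hs : MemLp (fun x => (fourier (-n) x : ℂ) * h x) 2
        (haarAddCircle (T := 2 * Real.pi)) := by
      refine hh.mul' (memLp_top_of_bound
        (map_continuous (fourier (-n))).aestronglyMeasurable 1 (ae_of_all _ fun x => ?_))
      exact (norm_fourier_pt _ x).le
    have := int_mul_zero hφ2 hs fun k => ?_
    · unfold fourierCoeff
      rw [← this]
      congr 1
      ext x
      simp only [smul_eq_mul]
      ring
    · by_cases hk : 0 < k
      · exact Or.inl (hφH _ (by omega))
      · right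
        rw [← hH (k + n) (by omega)]
        unfold fourierCoeff
        congr 1
        ext x
        simp only [smul_eq_mul]
        rw [← mul_assoc, ← fourier_add]
        congr 3
        ring
  · have hw : ∀ m : ℕ, fourierCoeff (fun x => h x * kerC z x) (-(m : ℤ)) = 0 := by
      intro m
      induction m with
      | zero => simpa using h0
      | succ m ih =>
        rw [coeff_rec hz hh1, hH _ (by omega)]
        have : -((m + 1 : ℕ) : ℤ) + 1 = -(m : ℤ) := by push_cast; ring
        rw [this, ih]
        simp
    have := int_mul_zero hφ2 (mul_ker_memLp hz hh) fun k => ?_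
    · unfold fourierCoeff
      rw [← this]
      congr 1
      ext x
      simp
      ring
    · by_cases hk : 0 < k
      · exact Or.inl (hφH _ (by omega))
      · right
        have := hw k.natAbs
        rwa [show -(k.natAbs : ℤ) = k by omega] at this

end Helpers

theorem stmt13 (φ : AddCircle (2 * Real.pi) → ℂ) (hφmeas : Measurable φ)
    (hφbdd : ∃ C : ℝ, ∀ x, ‖φ x‖ ≤ C)
    (hφH : ∀ n : ℤ, n < 0 → fourierCoeff φ n = 0)
    (f : Lp ℂ 2 μC)
    (hf : ∀ n : ℤ, n < 0 → fourierCoeff (f : AddCircle (2 * Real.pi) → ℂ) n = 0)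
    (hframe : ∃ A B : ℝ, 0 < A ∧ 0 < B ∧ ∀ g : Lp ℂ 2 μC,
      (∀ n : ℤ, n < 0 → fourierCoeff (g : AddCircle (2 * Real.pi) → ℂ) n = 0) →
      A * ‖g‖ ^ 2 ≤ ∑' n : ℕ,
          ‖∫ x, (g : AddCircle (2 * Real.pi) → ℂ) x *
            conj (φ x ^ n * (f : AddCircle (2 * Real.pi) → ℂ) x) ∂μC‖ ^ 2 ∧
        ∑' n : ℕ,
          ‖∫ x, (g : AddCircle (2 * Real.pi) → ℂ) x *
            conj (φ x ^ n * (f : AddCircle (2 * Real.pi) → ℂ) x) ∂μC‖ ^ 2 ≤ B * ‖g‖ ^ 2) :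
    ∀ z₀ : ℂ, ‖z₀‖ < 1 →
      ∑' n : ℕ, fourierCoeff (f : AddCircle (2 * Real.pi) → ℂ) (n : ℤ) * z₀ ^ n ≠ 0 := by
  obtain ⟨C, hC⟩ := hφbdd
  obtain ⟨A, B, hA, -, hfr⟩ := hframe
  intro z hz hzero
  have hφ : MemLp φ ⊤ (AddCircle.haarAddCircle (T := 2 * Real.pi)) :=
    memLp_top_of_bound hφmeas.aestronglyMeasurable C (ae_of_all _ hC)
  have hf2 : MemLp (f : AddCircle (2 * Real.pi) → ℂ) 2
    (AddCircle.haarAddCircle (T := 2 * Real.pi)) := Lp.memLp f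
  have hf0 : fourierCoeff (fun x => f x * kerC z x) 0 = 0 := by
    rw [← coeff_hasSum hz (hf2.mono_exponent (by norm_num)) 0, ← hzero]
    simp
  have hall : ∀ n : ℕ, MemLp (fun x => φ x ^ n * f x) 2
        (AddCircle.haarAddCircle (T := 2 * Real.pi)) ∧
      (∀ m : ℤ, m < 0 → fourierCoeff (fun x => φ x ^ n * f x) m = 0) ∧
      fourierCoeff (fun x => (φ x ^ n * f x) * kerC z x) 0 = 0 := by
    intro n
    induction n with
    | zero => simpa using ⟨hf2, hf, hf0⟩
    | succ n ih =>
      have := step hz hφ hφH ih.1 ih.2.1 ih.2.2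
      simpa only [pow_succ', mul_assoc] using this
  have hg : MemLp (fun x => conj (kerC z x)) 2 μC := (ker_memLp hz 2).star
  have hgc : ∀ n, fourierCoeff (hg.toLp : AddCircle (2 * Real.pi) → ℂ) n
      = conj (fourierCoeff (kerC z) (-n)) := fun n => by
    rw [← coeff_conj]
    exact congrFun (fourierCoeff_congr_ae hg.coeFn_toLp) n
  have key := (hfr hg.toLp fun n hn => by
    rw [hgc, ker_coeff hz (by omega), if_neg (by omega), map_zero]).1
  have hz' : ∀ n : ℕ, ∫ x, (hg.toLp : AddCircle (2 * Real.pi) → ℂ) x *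
      conj (φ x ^ n * (f : AddCircle (2 * Real.pi) → ℂ) x) ∂μC = 0 := by
    intro n
    have h1 := congrArg conj (hall n).2.2
    rw [map_zero] at h1
    rw [← h1]
    unfold fourierCoeff
    rw [← integral_conj]
    apply integral_congr_ae
    filter_upwards [hg.coeFn_toLp] with x hx
    rw [hx]
    simp
    ring
  simp only [hz', norm_zero, ne_eq, OfNat.ofNat_ne_zero, not_false_eq_true, zero_pow,
    tsum_zero] at key
  have hn : ‖hg.toLp‖ = 0 := by
    have : ‖hg.toLp‖ ^ 2 ≤ 0 := by
      by_contra hcon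
      push Not at hcon
      exact absurd key (not_le.mpr (mul_pos hA hcon))
    exact pow_eq_zero_iff (two_ne_zero) |>.mp (le_antisymm this (sq_nonneg _))
  have hg0 := norm_eq_zero.mp hn
  have h1 := hgc 0
  rw [neg_zero, ker_coeff hz le_rfl, if_pos rfl, map_one] at h1
  have h2 : fourierCoeff (hg.toLp : AddCircle (2 * Real.pi) → ℂ) 0 = 0 := by
    rw [hg0]
    rw [fourierCoeff_congr_ae (g := fun _ => 0) (Lp.coeFn_zero ℂ 2 μC)]
    simp [fourierCoeff]
  rw [h2] at h1
  exact zero_ne_one h1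
end
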